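/- There do not exist positive integers k and q such that 9 divides k, k divides q² + 1, and k² − 6k + 37 = 8q². -/

import Mathlib

/-- There are no positive integers `k, q` such that `9 ∣ k`,
`k ∣ q² + 1` and `k² − 6k + 37 = 8q²`. -/
theorem stmt_13 :
    ¬ ∃ k q : ℤ, 0 < k ∧ 0 < q ∧ 9 ∣ k ∧ k ∣ q ^ 2 + 1 ∧
      k ^ 2 - 6 * k + 37 = 8 * q ^ 2 := by
  rintro ⟨k, q, -, -, h9, hk, -⟩
  -- Divisibility alone is contradictory: `3 ∣ q ^ 2 + 1`, but `-1` is not a square modulo `3`.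
  have h3 : (q ^ 2 + 1) % 3 = 0 :=
    Int.emod_eq_zero_of_dvd (((by norm_num : (3 : ℤ) ∣ 9).trans h9).trans hk)
  have hq : q % 3 = 0 ∨ q % 3 = 1 ∨ q % 3 = 2 := by omega
  rcases hq with h | h | h <;> norm_num [pow_two, Int.add_emod, Int.mul_emod, h] at h3
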